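/- Let M = {m1, m2, m3}, W = {w1, w2, w3}, and let P be the preference profile in which every agent ranks being unmatched last and: m1 ranks w1, w2, w3; m2 ranks w1, w3, w2; m3 ranks w2, w1, w3; w1 ranks m3, m2, m1; w2 ranks m2, m1, m3; w3 ranks m3, m2, m1. Then no coalition blocks, ex-post at P, the mechanism that outputs a uniformly random perfect matching (i.e., the uniform distribution over the six matchings in which every agent is matched). -/

import Mathlib

open scoped ENNReal

namespace Unraveling

variable (M W : Type*) [Fintype M] [DecidableEq M] [Fintype W] [DecidableEq W]

/-- A matching between men `M` and women `W`.  `Sum.inl m` denotes man `m`,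
`Sum.inr w` denotes woman `w`; `toFun a = a` means agent `a` is unmatched. -/
structure Matching where
  toFun : M ⊕ W → M ⊕ W
  man_range : ∀ m : M, toFun (Sum.inl m) = Sum.inl m ∨ ∃ w : W, toFun (Sum.inl m) = Sum.inr w
  woman_range : ∀ w : W, toFun (Sum.inr w) = Sum.inr w ∨ ∃ m : M, toFun (Sum.inr w) = Sum.inl m
  mutual_cond : ∀ (m : M) (w : W), toFun (Sum.inl m) = Sum.inr w ↔ toFun (Sum.inr w) = Sum.inl m

/-- A preference profile: each man has a ranking (a bijection onto `{1,…,|W|+1}`,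
encoded as an `Equiv` onto `Fin (|W|+1)`) of the women together with the option
(`none`) of remaining unmatched, and symmetrically for women. -/
structure Profile where
  mpref : M → (Option W ≃ Fin (Fintype.card W + 1))
  wpref : W → (Option M ≃ Fin (Fintype.card M + 1))

variable {M W}

/-- The partner of man `m` under matching `μ` (`none` if unmatched). -/
def Matching.partnerM (μ : Matching M W) (m : M) : Option W :=
  match μ.toFun (Sum.inl m) with
  | Sum.inl _ => none
  | Sum.inr w => some w

/-- The partner of woman `w` under matching `μ` (`none` if unmatched). -/
def Matching.partnerW (μ : Matching M W) (w : W) : Option M :=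
  match μ.toFun (Sum.inr w) with
  | Sum.inr _ => none
  | Sum.inl m => some m

/-- The rank (`1` = most preferred) that man `m` assigns to `o` under profile `P`. -/
def mrank (P : Profile M W) (m : M) (o : Option W) : ℕ := (P.mpref m o : ℕ) + 1

/-- The rank (`1` = most preferred) that woman `w` assigns to `o` under profile `P`. -/
def wrank (P : Profile M W) (w : W) (o : Option M) : ℕ := (P.wpref w o : ℕ) + 1

/-- The rank that agent `a` assigns to his/her partner under matching `μ`. -/
def prank (P : Profile M W) (μ : Matching M W) : M ⊕ W → ℕ
  | Sum.inl m => mrank P m (μ.partnerM m)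
  | Sum.inr w => wrank P w (μ.partnerW w)

/-- The rank that agent `a` assigns to remaining unmatched. -/
def urank (P : Profile M W) : M ⊕ W → ℕ
  | Sum.inl m => mrank P m none
  | Sum.inr w => wrank P w none

/-- Stability of a matching at a profile. -/
def IsStable (P : Profile M W) (μ : Matching M W) : Prop :=
  (∀ a : M ⊕ W, prank P μ a ≤ urank P a) ∧
  (∀ (m : M) (w : W), mrank P m (some w) < prank P μ (Sum.inl m) →
     prank P μ (Sum.inr w) < wrank P w (some m))

/-- A mechanism maps each preference profile to a probability distribution over matchings. -/
abbrev Mechanism (M W : Type*) [Fintype M] [DecidableEq M] [Fintype W] [DecidableEq W] :=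
  Profile M W → PMF (Matching M W)

/-- The probability that `p` assigns to the set `s`. -/
noncomputable def prob {α : Type*} (p : PMF α) (s : Set α) : ℝ≥0∞ :=
  ∑' x, s.indicator (fun y => p y) x

/-- CDF of the rank that agent `a` assigns to his/her random partner, when the
matching is drawn from `p` and the profile is `P`. -/
noncomputable def cdfAt (P : Profile M W) (p : PMF (Matching M W)) (a : M ⊕ W) (n : ℕ) : ℝ≥0∞ :=
  prob p {μ | prank P μ a ≤ n}

/-- `SD F G` : the rank distribution with CDF `F` strictly first-order
stochastically dominates the one with CDF `G`. -/
def SD (F G : ℕ → ℝ≥0∞) : Prop := (∀ n, G n ≤ F n) ∧ ∃ n, G n < F n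

/-- A coalition consisting of at most one man and at most one woman. -/
def IsPairCoalition (A' : Set (M ⊕ W)) : Prop :=
  {m : M | Sum.inl m ∈ A'}.Subsingleton ∧ {w : W | Sum.inr w ∈ A'}.Subsingleton

/-- Coalition `A'` blocks mechanism `φ` ex-post at profile `P`. -/
def BlocksExPost (A' : Set (M ⊕ W)) (φ : Mechanism M W) (P : Profile M W) : Prop :=
  A'.Nonempty ∧ ∃ φ' : Mechanism M W,
    (∀ a ∈ A', prob (φ' P) {μ | μ.toFun a ∈ A'} = 1) ∧
    (∀ a ∈ A', SD (cdfAt P (φ' P) a) (cdfAt P (φ P) a))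

def ExPostStable (φ : Mechanism M W) : Prop :=
  ∀ (P : Profile M W) (A' : Set (M ⊕ W)), ¬ BlocksExPost A' φ P

def ExPostPairwiseStable (φ : Mechanism M W) : Prop :=
  ∀ (P : Profile M W) (A' : Set (M ⊕ W)), IsPairCoalition A' → ¬ BlocksExPost A' φ P

/-- Ex-ante CDF of the rank of agent `a`'s partner under mechanism `φ`, when
the profile is drawn from prior `ψ`. -/
noncomputable def cdfExAnte (ψ : PMF (Profile M W)) (φ : Mechanism M W) (a : M ⊕ W) (n : ℕ) : ℝ≥0∞ :=
  ∑' P, ψ P * cdfAt P (φ P) a n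

/-- Coalition `A'` blocks mechanism `φ` ex-ante at prior `ψ`. -/
def BlocksExAnte (A' : Set (M ⊕ W)) (φ : Mechanism M W) (ψ : PMF (Profile M W)) : Prop :=
  A'.Nonempty ∧ ∃ φ' : Mechanism M W,
    (∀ a ∈ A', (∑' P, ψ P * prob (φ' P) {μ | μ.toFun a ∈ A'}) = 1) ∧
    (∀ a ∈ A', SD (cdfExAnte ψ φ' a) (cdfExAnte ψ φ a))

def ExAnteStableAt (φ : Mechanism M W) (ψ : PMF (Profile M W)) : Prop :=
  ∀ A' : Set (M ⊕ W), ¬ BlocksExAnte A' φ ψ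

def ExAnteStable (φ : Mechanism M W) : Prop := ∀ ψ, ExAnteStableAt φ ψ

def ExAntePairwiseStable (φ : Mechanism M W) : Prop :=
  ∀ (ψ : PMF (Profile M W)) (A' : Set (M ⊕ W)), IsPairCoalition A' → ¬ BlocksExAnte A' φ ψ

/-- `prefEq P P' a` : profiles `P` and `P'` give agent `a` the same preferences. -/
def prefEq (P P' : Profile M W) : M ⊕ W → Prop
  | Sum.inl m => P.mpref m = P'.mpref m
  | Sum.inr w => P.wpref w = P'.wpref w

/-- The event `Y_a(P̃_a)`: profiles in which `a`'s preferences agree with `Pt`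
and every other member of the coalition `A'` has preferences in his/her
acceptance set `R`. -/
def interimEvent (A' : Set (M ⊕ W)) (R : (M ⊕ W) → Set (Profile M W)) (a : M ⊕ W)
    (Pt : Profile M W) : Set (Profile M W) :=
  {P | prefEq P Pt a ∧ ∀ a' ∈ A', a' ≠ a → P ∈ R a'}

/-- CDF of the rank of `a`'s partner under `φ`, with the profile drawn from `ψ`
conditioned on the event `Y`. -/
noncomputable def cdfCond (ψ : PMF (Profile M W)) (Y : Set (Profile M W)) (φ : Mechanism M W)
    (a : M ⊕ W) (n : ℕ) : ℝ≥0∞ :=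
  (∑' P, Y.indicator (fun P' => ψ P' * cdfAt P' (φ P') a n) P) / prob ψ Y

/-- Coalition `A'` blocks mechanism `φ` in the interim at prior `ψ`.  Each `R a`
is the set of profiles in which `a`'s preferences are ones at which `a` agrees to
deviate; it is required to depend only on `a`'s own preferences. -/
def BlocksInterim (A' : Set (M ⊕ W)) (φ : Mechanism M W) (ψ : PMF (Profile M W)) : Prop :=
  A'.Nonempty ∧ ∃ (φ' : Mechanism M W) (R : (M ⊕ W) → Set (Profile M W)),
    (∀ (a : M ⊕ W) (P P' : Profile M W), prefEq P P' a → (P ∈ R a ↔ P' ∈ R a)) ∧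
    (∀ a ∈ A', ∀ P : Profile M W, prob (φ' P) {μ | μ.toFun a ∈ A'} = 1) ∧
    (∀ a ∈ A', ∀ Pt : Profile M W,
      Pt ∈ R a ↔ (0 < prob ψ (interimEvent A' R a Pt) ∧
        SD (cdfCond ψ (interimEvent A' R a Pt) φ' a)
           (cdfCond ψ (interimEvent A' R a Pt) φ a))) ∧
    0 < prob ψ {P | ∀ a ∈ A', P ∈ R a}

def InterimStableAt (φ : Mechanism M W) (ψ : PMF (Profile M W)) : Prop :=
  ∀ A' : Set (M ⊕ W), ¬ BlocksInterim A' φ ψ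

def InterimStable (φ : Mechanism M W) : Prop := ∀ ψ, InterimStableAt φ ψ

def InterimPairwiseStable (φ : Mechanism M W) : Prop :=
  ∀ (ψ : PMF (Profile M W)) (A' : Set (M ⊕ W)), IsPairCoalition A' → ¬ BlocksInterim A' φ ψ

/-- `MRanks P m rw ru` : man `m` assigns rank `rw w` to each woman `w` and
rank `ru` to remaining unmatched. -/
def MRanks (P : Profile M W) (m : M) (rw : W → ℕ) (ru : ℕ) : Prop :=
  (∀ w, mrank P m (some w) = rw w) ∧ mrank P m none = ru

/-- `WRanks P w rm ru` : woman `w` assigns rank `rm m` to each man `m` and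
rank `ru` to remaining unmatched. -/
def WRanks (P : Profile M W) (w : W) (rm : M → ℕ) (ru : ℕ) : Prop :=
  (∀ m, wrank P w (some m) = rm m) ∧ wrank P w none = ru

instance (P : Profile M W) (m : M) (rw : W → ℕ) (ru : ℕ) : Decidable (MRanks P m rw ru) :=
  decidable_of_iff ((∀ w, mrank P m (some w) = rw w) ∧ mrank P m none = ru) Iff.rfl

instance (P : Profile M W) (w : W) (rm : M → ℕ) (ru : ℕ) : Decidable (WRanks P w rm ru) :=
  decidable_of_iff ((∀ m, wrank P w (some m) = rm m) ∧ wrank P w none = ru) Iff.rfl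

/-- The perfect matching induced by a bijection `e : M ≃ W`. -/
def matchingOf (e : M ≃ W) : Matching M W where
  toFun a :=
    match a with
    | Sum.inl m => Sum.inr (e m)
    | Sum.inr w => Sum.inl (e.symm w)
  man_range m := Or.inr ⟨e m, rfl⟩
  woman_range w := Or.inr ⟨e.symm w, rfl⟩
  mutual_cond m w := by
    constructor
    · intro h
      simp only [Sum.inr.injEq] at h
      simp [← h]
    · intro h
      simp only [Sum.inl.injEq] at h
      simp [← h]

/-- `P'` is the permutation of profile `P` obtained by (`σM`, `σW`):
`P_a(a') = P'_{σ(a)}(σ(a'))` for all agents `a` and all `a'` in the domain of `P_a`. -/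
def IsPermutedProfile (σM : Equiv.Perm M) (σW : Equiv.Perm W) (P P' : Profile M W) : Prop :=
  (∀ m w, P'.mpref (σM m) (some (σW w)) = P.mpref m (some w)) ∧
  (∀ m, P'.mpref (σM m) none = P.mpref m none) ∧
  (∀ w m, P'.wpref (σW w) (some (σM m)) = P.wpref w (some m)) ∧
  (∀ w, P'.wpref (σW w) none = P.wpref w none)

/-- Probability (jointly over the profile drawn from `ψ` and the internal
randomization of `φ`) that agent `a` is assigned a partner of rank exactly `k`. -/
noncomputable def probRankEq (ψ : PMF (Profile M W)) (φ : Mechanism M W) (a : M ⊕ W) (k : ℕ) : ℝ≥0∞ :=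
  ∑' P, ψ P * prob (φ P) {μ | prank P μ a = k}

/-- CDF of a distribution on ranks `{1,2,3}` with probabilities `q1`, `q2`, `q3`. -/
def cdf3 (q1 q2 q3 : ℝ) (n : ℕ) : ℝ :=
  (if 1 ≤ n then q1 else 0) + (if 2 ≤ n then q2 else 0) + (if 3 ≤ n then q3 else 0)

/-- Strict first-order stochastic dominance for real-valued rank CDFs. -/
def SDR (F G : ℕ → ℝ) : Prop := (∀ n, G n ≤ F n) ∧ ∃ n, G n < F n

end Unraveling

namespace Unraveling

lemma prob_le_one' {α : Type*} (p : PMF α) (s : Set α) : prob p s ≤ 1 := by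
  rw [← p.tsum_coe]
  exact ENNReal.tsum_le_tsum fun x => Set.indicator_le_self' (fun _ _ => zero_le) x

lemma prob_ne_top {α : Type*} (p : PMF α) (s : Set α) : prob p s ≠ ⊤ :=
  ne_top_of_le_ne_top ENNReal.one_ne_top (prob_le_one' p s)

/-- Real-valued probability. -/
noncomputable def pr {α : Type*} (p : PMF α) (s : Set α) : ℝ := (prob p s).toReal

lemma pr_le_one {α : Type*} (p : PMF α) (s : Set α) : pr p s ≤ 1 := by
  have := ENNReal.toReal_mono ENNReal.one_ne_top (prob_le_one' p s)
  simpa [pr] using this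

lemma pr_mono {α : Type*} (p : PMF α) {s t : Set α} (h : s ⊆ t) : pr p s ≤ pr p t := by
  refine ENNReal.toReal_mono (prob_ne_top p t) ?_
  exact ENNReal.tsum_le_tsum fun x =>
    Set.indicator_le_indicator_of_subset h (fun _ => zero_le) x

lemma pr_union {α : Type*} (p : PMF α) {s t : Set α} (h : Disjoint s t) :
    pr p (s ∪ t) = pr p s + pr p t := by
  unfold pr
  rw [← ENNReal.toReal_add (prob_ne_top p s) (prob_ne_top p t)]
  congr 1
  unfold prob
  rw [← ENNReal.tsum_add]
  congr 1
  ext x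
  rw [Set.indicator_union_of_disjoint h]

lemma pr_unif (p : PMF (Matching (Fin 3) (Fin 3)))
    (hp : ∀ μ : Matching (Fin 3) (Fin 3),
      p μ = if ∀ a, μ.toFun a ≠ a then (6 : ℝ≥0∞)⁻¹ else 0)
    (S : Set (Matching (Fin 3) (Fin 3))) (T : Finset (Fin 3 ≃ Fin 3))
    (hT : ∀ e ∈ T, matchingOf e ∈ S) : (T.card : ℝ) / 6 ≤ pr p S := by
  have hinj : Function.Injective (matchingOf : (Fin 3 ≃ Fin 3) → Matching (Fin 3) (Fin 3)) := by
    intro e f h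
    ext m
    have h1 : (matchingOf e).toFun (Sum.inl m) = (matchingOf f).toFun (Sum.inl m) := by rw [h]
    simp only [matchingOf, Sum.inr.injEq] at h1
    rw [h1]
  have h1 : (T.card : ℝ≥0∞) * 6⁻¹ ≤ prob p S := by
    calc (T.card : ℝ≥0∞) * 6⁻¹ = ∑ e ∈ T, S.indicator (fun y => p y) (matchingOf e) := by
          rw [Finset.sum_congr rfl (g := fun _ => (6 : ℝ≥0∞)⁻¹)]
          · simp
          · intro e he
            rw [Set.indicator_of_mem (hT e he), hp, if_pos]
            rintro (m | w) <;> simp [matchingOf]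
      _ ≤ ∑' e, S.indicator (fun y => p y) (matchingOf e) := ENNReal.sum_le_tsum T
      _ ≤ prob p S :=
          ENNReal.tsum_comp_le_tsum_of_injective hinj (S.indicator (fun y => p y))
  have h2 := ENNReal.toReal_mono (prob_ne_top p S) h1
  simpa [pr, div_eq_mul_inv] using h2

lemma prank_of (P : Profile (Fin 3) (Fin 3)) (μ : Matching (Fin 3) (Fin 3)) :
    (∀ m w, μ.toFun (Sum.inl m) = Sum.inr w → prank P μ (Sum.inl m) = mrank P m (some w)) ∧
    (∀ w m, μ.toFun (Sum.inr w) = Sum.inl m → prank P μ (Sum.inr w) = wrank P w (some m)) := by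
  constructor
  · intro m w h
    simp [prank, Matching.partnerM, h]
  · intro m w h
    simp [prank, Matching.partnerW, h]

lemma man_le {P : Profile (Fin 3) (Fin 3)} {m : Fin 3} {r : Fin 3 → ℕ}
    (h : MRanks P m r 4) {n : ℕ} (hn : n < 4) {μ : Matching (Fin 3) (Fin 3)}
    (hμ : prank P μ (Sum.inl m) ≤ n) : ∃ w, μ.toFun (Sum.inl m) = Sum.inr w ∧ r w ≤ n := by
  rcases μ.man_range m with h1 | ⟨w, h1⟩
  · simp [prank, Matching.partnerM, h1, h.2] at hμ
    omega
  · refine ⟨w, h1, ?_⟩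
    rwa [(prank_of P μ).1 m w h1, h.1] at hμ

lemma woman_le {P : Profile (Fin 3) (Fin 3)} {w : Fin 3} {r : Fin 3 → ℕ}
    (h : WRanks P w r 4) {n : ℕ} (hn : n < 4) {μ : Matching (Fin 3) (Fin 3)}
    (hμ : prank P μ (Sum.inr w) ≤ n) : ∃ m, μ.toFun (Sum.inr w) = Sum.inl m ∧ r m ≤ n := by
  rcases μ.woman_range w with h1 | ⟨m, h1⟩
  · simp [prank, Matching.partnerW, h1, h.2] at hμ
    omega
  · refine ⟨m, h1, ?_⟩
    rwa [(prank_of P μ).2 w m h1, h.1] at hμ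

lemma unif_man {P : Profile (Fin 3) (Fin 3)} {m : Fin 3} {r : Fin 3 → ℕ}
    (h : MRanks P m r 4) (p : PMF (Matching (Fin 3) (Fin 3)))
    (hp : ∀ μ : Matching (Fin 3) (Fin 3),
      p μ = if ∀ a, μ.toFun a ≠ a then (6 : ℝ≥0∞)⁻¹ else 0) (n : ℕ) :
    ((Finset.univ.filter (fun e : Fin 3 ≃ Fin 3 => r (e m) ≤ n)).card : ℝ) / 6
      ≤ (cdfAt P p (Sum.inl m) n).toReal := by
  refine pr_unif p hp _ _ fun e he => ?_
  simp only [Finset.mem_filter, Finset.mem_univ, true_and] at he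
  rw [Set.mem_ofPred_eq, (prank_of P _).1 m (e m) rfl, h.1]
  exact he

lemma unif_woman {P : Profile (Fin 3) (Fin 3)} {w : Fin 3} {r : Fin 3 → ℕ}
    (h : WRanks P w r 4) (p : PMF (Matching (Fin 3) (Fin 3)))
    (hp : ∀ μ : Matching (Fin 3) (Fin 3),
      p μ = if ∀ a, μ.toFun a ≠ a then (6 : ℝ≥0∞)⁻¹ else 0) (n : ℕ) :
    ((Finset.univ.filter (fun e : Fin 3 ≃ Fin 3 => r (e.symm w) ≤ n)).card : ℝ) / 6
      ≤ (cdfAt P p (Sum.inr w) n).toReal := by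
  refine pr_unif p hp _ _ fun e he => ?_
  simp only [Finset.mem_filter, Finset.mem_univ, true_and] at he
  rw [Set.mem_ofPred_eq, (prank_of P _).2 w (e.symm w) rfl, h.1]
  exact he

/-- The event that man `i` is matched with woman `j`. -/
def ev (i j : Fin 3) : Set (Matching (Fin 3) (Fin 3)) := {μ | μ.toFun (Sum.inl i) = Sum.inr j}

lemma ev_disj_w {i j j' : Fin 3} (h : j ≠ j') : Disjoint (ev i j) (ev i j') := by
  rw [Set.disjoint_left]
  intro μ h1 h2
  simp only [ev, Set.mem_ofPred_eq] at h1 h2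
  rw [h1] at h2
  exact h (Sum.inr.inj h2)

lemma ev_disj_m {i i' j : Fin 3} (h : i ≠ i') : Disjoint (ev i j) (ev i' j) := by
  rw [Set.disjoint_left]
  intro μ h1 h2
  simp only [ev, Set.mem_ofPred_eq] at h1 h2
  rw [μ.mutual_cond] at h1 h2
  rw [h1] at h2
  exact h (Sum.inl.inj h2)

/-- For the profile `P` of Example 1 (men `0,1,2`, women `0,1,2`;
`m1 : w1,w2,w3`; `m2 : w1,w3,w2`; `m3 : w2,w1,w3`; `w1 : m3,m2,m1`; `w2 : m2,m1,m3`;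
`w3 : m3,m2,m1`, everyone ranking unmatched last), no coalition blocks ex-post at `P`
the mechanism that outputs a uniformly random perfect matching. -/
theorem no_blocking_of_uniform_example1 (P : Profile (Fin 3) (Fin 3))
    (hm1 : MRanks P 0 ![1, 2, 3] 4) (hm2 : MRanks P 1 ![1, 3, 2] 4)
    (hm3 : MRanks P 2 ![2, 1, 3] 4)
    (hw1 : WRanks P 0 ![3, 2, 1] 4) (hw2 : WRanks P 1 ![2, 1, 3] 4)
    (hw3 : WRanks P 2 ![3, 2, 1] 4)
    (φ : Mechanism (Fin 3) (Fin 3))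
    (hφ : ∀ μ : Matching (Fin 3) (Fin 3),
      φ P μ = if ∀ a, μ.toFun a ≠ a then (6 : ℝ≥0∞)⁻¹ else 0)
    (A' : Set (Fin 3 ⊕ Fin 3)) :
    ¬ BlocksExPost A' φ P := by
  rintro ⟨⟨a0, ha0⟩, φ', hcl, hsd⟩
  set q := φ' P with hq
  have closed : ∀ a ∈ A', ∀ b, 0 < pr q {μ | μ.toFun a = b} → b ∈ A' := by
    intro a ha b hb
    by_contra hbA
    have hd : Disjoint {μ : Matching (Fin 3) (Fin 3) | μ.toFun a ∈ A'} {μ | μ.toFun a = b} := by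
      rw [Set.disjoint_left]
      intro μ h1 h2
      simp only [Set.mem_ofPred_eq] at h1 h2
      exact hbA (h2 ▸ h1)
    have h1 := pr_union q hd
    have h2 := pr_le_one q ({μ | μ.toFun a ∈ A'} ∪ {μ | μ.toFun a = b})
    have h3 : pr q {μ | μ.toFun a ∈ A'} = 1 := by simp [pr, hcl a ha]
    linarith
  have sym : ∀ i j : Fin 3, {μ : Matching (Fin 3) (Fin 3) | μ.toFun (Sum.inr j) = Sum.inl i}
      = ev i j := by
    intro i j
    ext μ
    exact (μ.mutual_cond i j).symm
  have closedM : ∀ i j : Fin 3, Sum.inl i ∈ A' → 0 < pr q (ev i j) → Sum.inr j ∈ A' :=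
    fun i j h hp => closed _ h _ hp
  have closedW : ∀ i j : Fin 3, Sum.inr j ∈ A' → 0 < pr q (ev i j) → Sum.inl i ∈ A' :=
    fun i j h hp => closed _ h _ (by rw [sym]; exact hp)
  have dom : ∀ a ∈ A', ∀ n, (cdfAt P (φ P) a n).toReal ≤ pr q {μ | prank P μ a ≤ n} :=
    fun a ha n => ENNReal.toReal_mono (prob_ne_top _ _) ((hsd a ha).1 n)
  have manTop : ∀ (m t : Fin 3) (r : Fin 3 → ℕ), MRanks P m r 4 → (∀ w, r w ≤ 1 → w = t) →
      ((Finset.univ.filter (fun e : Fin 3 ≃ Fin 3 => r (e m) ≤ 1)).card = 2) →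
      Sum.inl m ∈ A' → 1 / 3 ≤ pr q (ev m t) := by
    intro m t r hr ht hc hA
    have h1 := unif_man hr (φ P) hφ 1
    rw [hc] at h1
    have h2 := dom _ hA 1
    have h3 : pr q {μ | prank P μ (Sum.inl m) ≤ 1} ≤ pr q (ev m t) := by
      refine pr_mono q fun μ hμ => ?_
      obtain ⟨w, hw, hw'⟩ := man_le hr (by norm_num) hμ
      rw [ht w hw'] at hw
      exact hw
    norm_num at h1
    linarith
  have womTop : ∀ (w t : Fin 3) (r : Fin 3 → ℕ), WRanks P w r 4 → (∀ m, r m ≤ 1 → m = t) →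
      ((Finset.univ.filter (fun e : Fin 3 ≃ Fin 3 => r (e.symm w) ≤ 1)).card = 2) →
      Sum.inr w ∈ A' → 1 / 3 ≤ pr q (ev t w) := by
    intro w t r hr ht hc hA
    have h1 := unif_woman hr (φ P) hφ 1
    rw [hc] at h1
    have h2 := dom _ hA 1
    have h3 : pr q {μ | prank P μ (Sum.inr w) ≤ 1} ≤ pr q (ev t w) := by
      rw [← sym]
      refine pr_mono q fun μ hμ => ?_
      obtain ⟨m, hm, hm'⟩ := woman_le hr (by norm_num) hμ
      rw [ht m hm'] at hm
      exact hm
    norm_num at h1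
    linarith
  have t1 := manTop 0 0 _ hm1 (by decide) (by decide)
  have t2 := manTop 1 0 _ hm2 (by decide) (by decide)
  have t3 := manTop 2 1 _ hm3 (by decide) (by decide)
  have s1 := womTop 0 2 _ hw1 (by decide) (by decide)
  have s2 := womTop 1 1 _ hw2 (by decide) (by decide)
  have s3 := womTop 2 2 _ hw3 (by decide) (by decide)
  have pos : ∀ x : ℝ, 1 / 3 ≤ x → 0 < x := fun x hx => by linarith
  have c1 : Sum.inl 0 ∈ A' → Sum.inr 0 ∈ A' := fun h => closedM 0 0 h (pos _ (t1 h))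
  have c2 : Sum.inl 1 ∈ A' → Sum.inr 0 ∈ A' := fun h => closedM 1 0 h (pos _ (t2 h))
  have c3 : Sum.inl 2 ∈ A' → Sum.inr 1 ∈ A' := fun h => closedM 2 1 h (pos _ (t3 h))
  have d1 : Sum.inr 0 ∈ A' → Sum.inl 2 ∈ A' := fun h => closedW 2 0 h (pos _ (s1 h))
  have d2 : Sum.inr 1 ∈ A' → Sum.inl 1 ∈ A' := fun h => closedW 1 1 h (pos _ (s2 h))
  have d3 : Sum.inr 2 ∈ A' → Sum.inl 2 ∈ A' := fun h => closedW 2 2 h (pos _ (s3 h))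
  have hM2 : Sum.inl 1 ∈ A' := by
    rcases a0 with i | i <;> fin_cases i
    · exact d2 (c3 (d1 (c1 ha0)))
    · exact ha0
    · exact d2 (c3 ha0)
    · exact d2 (c3 (d1 ha0))
    · exact d2 ha0
    · exact d2 (c3 (d3 ha0))
  have hW1 := c2 hM2
  have hM3 := d1 hW1
  have hW2 := c3 hM3
  -- the second man is matched to the second woman with probability at most 1/3
  have e22 : pr q (ev 1 1) ≤ 1 / 3 := by
    have h1 := unif_man hm2 (φ P) hφ 2
    rw [show (Finset.univ.filter
      (fun e : Fin 3 ≃ Fin 3 => (![1, 3, 2] : Fin 3 → ℕ) (e 1) ≤ 2)).card = 4 by decide] at h1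
    have h2 := dom _ hM2 2
    have hd : Disjoint {μ | prank P μ (Sum.inl 1) ≤ 2} (ev 1 1) := by
      rw [Set.disjoint_left]
      intro μ hμ h3
      obtain ⟨w, hw, hw'⟩ := man_le hm2 (by norm_num) hμ
      have h4 : w = 1 := Sum.inr.inj (hw.symm.trans h3)
      subst h4
      simp at hw'
    have h3 := pr_union q hd
    have h4 := pr_le_one q ({μ | prank P μ (Sum.inl 1) ≤ 2} ∪ ev 1 1)
    norm_num at h1
    linarith
  have e12 : 2 / 3 ≤ pr q (ev 0 1) + pr q (ev 1 1) := by
    have h1 := unif_woman hw2 (φ P) hφ 2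
    rw [show (Finset.univ.filter
      (fun e : Fin 3 ≃ Fin 3 => (![2, 1, 3] : Fin 3 → ℕ) (e.symm 1) ≤ 2)).card = 4 by decide] at h1
    have h2 := dom _ hW2 2
    have h3 : pr q {μ | prank P μ (Sum.inr 1) ≤ 2} ≤ pr q (ev 0 1 ∪ ev 1 1) := by
      refine pr_mono q fun μ hμ => ?_
      obtain ⟨m, hm, hm'⟩ := woman_le hw2 (by norm_num) hμ
      rw [← sym, ← sym]
      fin_cases m
      · exact Or.inl hm
      · exact Or.inr hm
      · simp at hm'
    rw [pr_union q (ev_disj_m (by decide))] at h3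
    norm_num at h1
    linarith
  have hM1 : Sum.inl 0 ∈ A' := closedW 0 1 hW2 (by linarith)
  -- the first woman gets exactly the uniform distribution
  have f1 := t1 hM1
  have f2 := t2 hM2
  have f3 := s1 hW1
  have hd01 : pr q (ev 0 0 ∪ ev 1 0) = pr q (ev 0 0) + pr q (ev 1 0) :=
    pr_union q (ev_disj_m (by decide))
  have hd : pr q (ev 0 0) + pr q (ev 1 0) + pr q (ev 2 0) ≤ 1 := by
    rw [← hd01, ← pr_union q
      (Disjoint.union_left (ev_disj_m (by decide)) (ev_disj_m (by decide)))]
    exact pr_le_one _ _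
  obtain ⟨n, hn⟩ := (hsd _ hW1).2
  have hn' : (cdfAt P (φ P) (Sum.inr 0) n).toReal < pr q {μ | prank P μ (Sum.inr 0) ≤ n} :=
    (ENNReal.toReal_lt_toReal (prob_ne_top _ _) (prob_ne_top _ _)).2 hn
  have hu := unif_woman hw1 (φ P) hφ n
  obtain rfl | rfl | rfl | h3 : n = 0 ∨ n = 1 ∨ n = 2 ∨ 3 ≤ n := by omega
  · have h0 : {μ | prank P μ (Sum.inr 0) ≤ 0} = (∅ : Set (Matching (Fin 3) (Fin 3))) := by
      ext μ
      simp [prank, wrank]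
    rw [h0] at hn'
    have h1 : pr q ∅ = 0 := by simp [pr, prob]
    have h2 : 0 ≤ (cdfAt P (φ P) (Sum.inr 0) 0).toReal := ENNReal.toReal_nonneg
    linarith
  · rw [show (Finset.univ.filter
      (fun e : Fin 3 ≃ Fin 3 => (![3, 2, 1] : Fin 3 → ℕ) (e.symm 0) ≤ 1)).card = 2 by decide] at hu
    have h3 : pr q {μ | prank P μ (Sum.inr 0) ≤ 1} ≤ pr q (ev 2 0) := by
      rw [← sym]
      refine pr_mono q fun μ hμ => ?_
      obtain ⟨m, hm, hm'⟩ := woman_le hw1 (by norm_num) hμ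
      fin_cases m
      · simp at hm'
      · simp at hm'
      · exact hm
    norm_num at hu
    linarith
  · rw [show (Finset.univ.filter
      (fun e : Fin 3 ≃ Fin 3 => (![3, 2, 1] : Fin 3 → ℕ) (e.symm 0) ≤ 2)).card = 4 by decide] at hu
    have h3 : pr q {μ | prank P μ (Sum.inr 0) ≤ 2} ≤ pr q (ev 1 0 ∪ ev 2 0) := by
      rw [← sym, ← sym]
      refine pr_mono q fun μ hμ => ?_
      obtain ⟨m, hm, hm'⟩ := woman_le hw1 (by norm_num) hμ
      fin_cases m
      · simp at hm'
      · exact Or.inl hm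
      · exact Or.inr hm
    rw [pr_union q (ev_disj_m (by decide))] at h3
    norm_num at hu
    linarith
  · have hall : Finset.univ.filter
        (fun e : Fin 3 ≃ Fin 3 => (![3, 2, 1] : Fin 3 → ℕ) (e.symm 0) ≤ n) = Finset.univ := by
      rw [Finset.filter_true_of_mem]
      intro e _
      have h4 : ∀ i : Fin 3, (![3, 2, 1] : Fin 3 → ℕ) i ≤ 3 := by decide
      exact (h4 _).trans h3
    rw [hall, show (Finset.univ : Finset (Fin 3 ≃ Fin 3)).card = 6 by decide] at hu
    have := pr_le_one q {μ | prank P μ (Sum.inr 0) ≤ n}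
    norm_num at hu
    linarith

end Unraveling
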